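/- The 4-dimensional real algebra M_2(ℝ)^(−), i.e. the space of 2×2 real matrices with multiplication [X,Y] = XY − YX, has length exactly 3; in particular, S = {E_{11} − E_{12}, E_{21} + E_{22}}, where E_{ij} denotes the matrix unit with 1 in position (i,j) and 0 elsewhere, is a generating set of M_2(ℝ)^(−) with l(S) = 3. -/

import Mathlib

/-!
Framework: length of finite-dimensional not necessarily associative,
not necessarily unital algebras (non-unital convention: `L_0(S) = 0`).
The multiplication of the algebra is passed explicitly as a binary
operation `μ`, so that the same definitions apply to an algebra, to its
commutator algebra, to a Lie bracket, etc.
-/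

open Submodule Module

/-- `IsWord μ S k w`: `w` is a product of `k` elements of `S` (with respect to the
multiplication `μ`) with some placement of parentheses. -/
inductive IsWord {A : Type*} (μ : A → A → A) (S : Set A) : ℕ → A → Prop
  | base {a : A} (ha : a ∈ S) : IsWord μ S 1 a
  | mul {m n : ℕ} {a b : A} (ha : IsWord μ S m a) (hb : IsWord μ S n b) :
      IsWord μ S (m + n) (μ a b)

/-- The multiplication of an algebra, as a plain binary operation. -/
def amul (A : Type*) [Mul A] : A → A → A := fun a b => a * b

section
variable (F : Type*) {A : Type*} [Field F] [AddCommGroup A] [Module F A]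

/-- `L_i(S)`: the linear span of all words in `S` of length at most `i`
(non-unital convention, so `L_0(S) = 0`). -/
def Lset (μ : A → A → A) (S : Set A) (i : ℕ) : Submodule F A :=
  Submodule.span F {a | ∃ k, k ≤ i ∧ IsWord μ S k a}

/-- `S` generates the algebra, i.e. the span of all words in `S` is everything. -/
def Generates (μ : A → A → A) (S : Set A) : Prop :=
  Submodule.span F {a | ∃ k, IsWord μ S k a} = ⊤

/-- `l(S)`: the length of a generating set `S`, the least `k` with `L_k(S) = A`. -/
noncomputable def lenSet (μ : A → A → A) (S : Set A) : ℕ :=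
  sInf {k | Lset F μ S k = ⊤}

/-- An irreducible word of length `k` in `S`. -/
def IrredWord (μ : A → A → A) (S : Set A) (k : ℕ) (w : A) : Prop :=
  IsWord μ S k w ∧ ∀ m, m < k → w ∉ Lset F μ S m

end

section
variable {A : Type*}

/-- The set `P(x,y,z)` of monomials. -/
def Pset (μ : A → A → A) (x y z : A) : Set A :=
  {μ (μ x z) y, μ (μ z x) y, μ (μ y z) x, μ (μ z y) x,
   μ x (μ z y), μ x (μ y z), μ y (μ x z), μ y (μ z x),
   μ x y, μ y x, μ x z, μ z x, μ y z, μ z y, x, y, z}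

/-- The set `Q_l(x,y,z)` of monomials. -/
def Qlset (μ : A → A → A) (x y z : A) : Set A :=
  {μ x (μ z y), μ x (μ y z), μ y (μ x z), μ y (μ z x),
   μ x y, μ y x, μ x z, μ z x, μ y z, μ z y, x, y, z}

/-- The set `Q_r(x,y,z)` of monomials. -/
def Qrset (μ : A → A → A) (x y z : A) : Set A :=
  {μ (μ x z) y, μ (μ z x) y, μ (μ y z) x, μ (μ z y) x,
   μ x y, μ y x, μ x z, μ z x, μ y z, μ z y, x, y, z}

end

section
variable (F : Type*) {A : Type*} [Field F] [AddCommGroup A] [Module F A]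

/-- A mixing algebra: `(xy)z` and `z(xy)` lie in the span of `P(x,y,z)`. -/
def IsMixing (μ : A → A → A) : Prop :=
  ∀ x y z : A, μ (μ x y) z ∈ Submodule.span F (Pset μ x y z) ∧
    μ z (μ x y) ∈ Submodule.span F (Pset μ x y z)

/-- A sliding algebra: either `z(xy)` always lies in the span of `Q_r(x,y,z)`, or
`(xy)z` always lies in the span of `Q_l(x,y,z)`. -/
def IsSliding (μ : A → A → A) : Prop :=
  (∀ x y z : A, μ z (μ x y) ∈ Submodule.span F (Qrset μ x y z)) ∨
  (∀ x y z : A, μ (μ x y) z ∈ Submodule.span F (Qlset μ x y z))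

end

section LieLength

variable {F L : Type*} [Field F] [LieRing L] [LieAlgebra F L] {S : Set L}

/-- A subspace stable under bracketing with `S` is stable under bracketing with words in `S`. -/
lemma IsWord.lie_mem {M : Submodule F L} (hM : ∀ s ∈ S, ∀ x ∈ M, ⁅s, x⁆ ∈ M) {k : ℕ} {w : L}
    (hw : IsWord (fun X Y : L => ⁅X, Y⁆) S k w) : ∀ x ∈ M, ⁅w, x⁆ ∈ M := by
  induction hw with
  | base ha => exact hM _ ha
  | mul _ _ iha ihb =>
    intro x hx
    rw [lie_lie]
    exact M.sub_mem (iha _ (ihb x hx)) (ihb _ (iha x hx))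

lemma eq_top_of_generates_of_lie_mem
    (hS : Generates F (fun X Y : L => ⁅X, Y⁆) S) {M : Submodule F L} (hSM : S ⊆ M)
    (hM : ∀ s ∈ S, ∀ x ∈ M, ⁅s, x⁆ ∈ M) : M = ⊤ := by
  rw [eq_top_iff, ← hS, Submodule.span_le]
  rintro w ⟨k, hw⟩
  induction hw with
  | base ha => exact hSM ha
  | mul ha _ _ ihb => exact ha.lie_mem hM _ ihb

lemma Lset_mono {A : Type*} [AddCommGroup A] [Module F A] (μ : A → A → A) (S : Set A) :
    Monotone (Lset F μ S) := by
  intro i j hij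
  refine Submodule.span_mono ?_
  rintro a ⟨k, hk, ha⟩
  exact ⟨k, hk.trans hij, ha⟩

lemma subset_Lset {A : Type*} [AddCommGroup A] [Module F A] (μ : A → A → A) (S : Set A)
    {k : ℕ} (hk : 1 ≤ k) : S ⊆ Lset F μ S k :=
  fun _ hs => Submodule.subset_span ⟨1, hk, .base hs⟩

lemma lie_mem_Lset_succ {s x : L} (hs : s ∈ S) {k : ℕ}
    (hx : x ∈ Lset F (fun X Y : L => ⁅X, Y⁆) S k) :
    ⁅s, x⁆ ∈ Lset F (fun X Y : L => ⁅X, Y⁆) S (k + 1) := by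
  induction hx using Submodule.span_induction with
  | mem x hx =>
    obtain ⟨n, hn, hx⟩ := hx
    exact Submodule.subset_span ⟨1 + n, by omega, .mul (.base hs) hx⟩
  | zero => simp
  | add x y _ _ hx hy => rw [lie_add]; exact add_mem hx hy
  | smul c x _ hx => rw [lie_smul]; exact Submodule.smul_mem _ c hx

lemma Lset_eq_top_of_eq_succ (hS : Generates F (fun X Y : L => ⁅X, Y⁆) S) {k : ℕ} (hk : 1 ≤ k)
    (h : Lset F (fun X Y : L => ⁅X, Y⁆) S k = Lset F (fun X Y : L => ⁅X, Y⁆) S (k + 1)) :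
    Lset F (fun X Y : L => ⁅X, Y⁆) S k = ⊤ :=
  eq_top_of_generates_of_lie_mem hS (subset_Lset _ S hk)
    fun _ hs _ hx => h ▸ lie_mem_Lset_succ hs hx

lemma Lset_eq_top_of_finrank_le_one [FiniteDimensional F L]
    (hS : Generates F (fun X Y : L => ⁅X, Y⁆) S)
    (h : finrank F (Lset F (fun X Y : L => ⁅X, Y⁆) S 1) ≤ 1) :
    Lset F (fun X Y : L => ⁅X, Y⁆) S 1 = ⊤ := by
  refine eq_top_of_generates_of_lie_mem hS (subset_Lset _ S le_rfl) fun s hs x hx => ?_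
  obtain ⟨v, hv⟩ := finrank_le_one_iff.mp h
  obtain ⟨c, hc⟩ := hv ⟨s, subset_Lset _ S le_rfl hs⟩
  obtain ⟨d, hd⟩ := hv ⟨x, hx⟩
  have hc' : c • (v : L) = s := congrArg Subtype.val hc
  have hd' : d • (v : L) = x := congrArg Subtype.val hd
  simp [← hc', ← hd']

lemma Lset_eq_top_or_lt_finrank [FiniteDimensional F L]
    (hS : Generates F (fun X Y : L => ⁅X, Y⁆) S) {k : ℕ} (hk : 1 ≤ k) :
    Lset F (fun X Y : L => ⁅X, Y⁆) S k = ⊤ ∨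
      k < finrank F (Lset F (fun X Y : L => ⁅X, Y⁆) S k) := by
  induction k, hk using Nat.le_induction with
  | base =>
    rw [or_iff_not_imp_right, not_lt]
    exact Lset_eq_top_of_finrank_le_one hS
  | succ k hk ih =>
    have hle := Lset_mono (F := F) (fun X Y : L => ⁅X, Y⁆) S k.le_succ
    rcases ih with ih | ih
    · exact .inl (top_le_iff.mp (ih ▸ hle))
    · rcases hle.eq_or_lt with h | h
      · exact .inl (h ▸ Lset_eq_top_of_eq_succ hS hk h)
      · exact .inr (Nat.lt_of_le_of_lt ih (Submodule.finrank_lt_finrank_of_lt h))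

/-- A generating set of a Lie algebra of dimension at most `k + 1`, with `k ≥ 1`, has length
at most `k`. -/
lemma Lset_eq_top_of_finrank_le [FiniteDimensional F L]
    (hS : Generates F (fun X Y : L => ⁅X, Y⁆) S) {k : ℕ} (hk : 1 ≤ k)
    (hL : finrank F L ≤ k + 1) : Lset F (fun X Y : L => ⁅X, Y⁆) S k = ⊤ := by
  rcases Lset_eq_top_or_lt_finrank hS hk with h | h
  · exact h
  · exact Submodule.eq_top_of_finrank_eq
      (le_antisymm (Submodule.finrank_le _) (hL.trans h))

end LieLength

lemma Lset_three_eq_top_of_generates {S : Set (Matrix (Fin 2) (Fin 2) ℝ)}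
    (hS : Generates ℝ (fun X Y : Matrix (Fin 2) (Fin 2) ℝ => X * Y - Y * X) S) :
    Lset ℝ (fun X Y : Matrix (Fin 2) (Fin 2) ℝ => X * Y - Y * X) S 3 = ⊤ := by
  let _ : LieRing (Matrix (Fin 2) (Fin 2) ℝ) := LieRing.ofAssociativeRing
  exact Lset_eq_top_of_finrank_le (F := ℝ) (L := Matrix (Fin 2) (Fin 2) ℝ) (S := S) (k := 3) hS
    (by norm_num) (by simp [Module.finrank_matrix])

lemma IsWord.one_le {A : Type*} {μ : A → A → A} {S : Set A} {k : ℕ} {w : A}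
    (hw : IsWord μ S k w) : 1 ≤ k := by
  induction hw with
  | base => exact le_rfl
  | mul _ _ ih _ => omega

lemma IsWord.mem_of_le_one {A : Type*} {μ : A → A → A} {S : Set A} {k : ℕ} {w : A}
    (hw : IsWord μ S k w) (hk : k ≤ 1) : w ∈ S := by
  cases hw with
  | base ha => exact ha
  | mul ha hb => have := ha.one_le; have := hb.one_le; omega

lemma IsWord.mem_or_eq_of_le_two {A : Type*} {μ : A → A → A} {S : Set A} {k : ℕ} {w : A}
    (hw : IsWord μ S k w) (hk : k ≤ 2) : w ∈ S ∨ ∃ a ∈ S, ∃ b ∈ S, w = μ a b := by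
  cases hw with
  | base ha => exact .inl ha
  | mul ha hb =>
    have := ha.one_le
    have := hb.one_le
    exact .inr ⟨_, ha.mem_of_le_one (by omega), _, hb.mem_of_le_one (by omega), rfl⟩

lemma generates_pair :
    Generates ℝ (fun X Y : Matrix (Fin 2) (Fin 2) ℝ => X * Y - Y * X)
      {!![(1 : ℝ), -1; 0, 0], !![(0 : ℝ), 0; 1, 1]} := by
  set μ := fun X Y : Matrix (Fin 2) (Fin 2) ℝ => X * Y - Y * X with hμ
  set a := !![(1 : ℝ), -1; 0, 0] with ha
  set b := !![(0 : ℝ), 0; 1, 1] with hb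
  have wa : IsWord μ {a, b} 1 a := .base (by simp)
  have wb : IsWord μ {a, b} 1 b := .base (by simp)
  refine eq_top_iff.mpr fun M _ => ?_
  let δ := -(M 0 0 + M 0 1 - M 1 0 + M 1 1) / 4
  let γ := -(M 0 0 + M 0 1) / 2 - δ
  have hM : M = (M 0 0 + γ - δ) • a + (M 1 0 + γ - δ) • b + γ • μ a b + δ • μ a (μ a b) := by
    ext i j
    fin_cases i <;> fin_cases j <;>
      simp [hμ, ha, hb, γ, δ] <;> ring
  rw [hM]
  have key {k : ℕ} {w : Matrix (Fin 2) (Fin 2) ℝ} (hw : IsWord μ {a, b} k w) (c : ℝ) :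
      c • w ∈ Submodule.span ℝ {x | ∃ k, IsWord μ {a, b} k x} :=
    Submodule.smul_mem _ c (Submodule.subset_span ⟨k, hw⟩)
  exact add_mem (add_mem (add_mem (key wa _) (key wb _)) (key (wa.mul wb) _))
    (key (wa.mul (wa.mul wb)) _)

/-- Words of length at most two in the pair satisfy a common linear equation on their entries. -/
lemma Lset_two_pair_ne_top :
    Lset ℝ (fun X Y : Matrix (Fin 2) (Fin 2) ℝ => X * Y - Y * X)
      {!![(1 : ℝ), -1; 0, 0], !![(0 : ℝ), 0; 1, 1]} 2 ≠ ⊤ := by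
  intro h
  have hent (x : Matrix (Fin 2) (Fin 2) ℝ) : x 0 0 + x 0 1 - x 1 0 + x 1 1 = 0 := by
    have hx : x ∈ Lset ℝ (fun X Y : Matrix (Fin 2) (Fin 2) ℝ => X * Y - Y * X)
        {!![(1 : ℝ), -1; 0, 0], !![(0 : ℝ), 0; 1, 1]} 2 := h ▸ Submodule.mem_top
    induction hx using Submodule.span_induction with
    | mem x hx =>
      obtain ⟨k, hk, hw⟩ := hx
      rcases hw.mem_or_eq_of_le_two hk with (rfl | rfl) | ⟨_, rfl | rfl, _, rfl | rfl, rfl⟩ <;>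
        simp
    | zero => simp
    | add x y _ _ hx hy => simp only [Matrix.add_apply]; linear_combination hx + hy
    | smul c x _ hx => simp only [Matrix.smul_apply, smul_eq_mul]; linear_combination c * hx
  simpa using hent !![1, 0; 0, 0]

/-- the algebra `M_2(ℝ)⁽⁻⁾` (2×2 real matrices with multiplication
`[X,Y] = XY − YX`) has length exactly 3; in particular the set
`S = {E₁₁ − E₁₂, E₂₁ + E₂₂}` generates it and `l(S) = 3`. -/
theorem m2_commutator_length_eq_three :
    (∀ S : Set (Matrix (Fin 2) (Fin 2) ℝ), S.Finite →
      Generates ℝ (fun X Y : Matrix (Fin 2) (Fin 2) ℝ => X * Y - Y * X) S →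
      lenSet ℝ (fun X Y : Matrix (Fin 2) (Fin 2) ℝ => X * Y - Y * X) S ≤ 3) ∧
    (({!![(1 : ℝ), -1; 0, 0], !![(0 : ℝ), 0; 1, 1]} :
        Set (Matrix (Fin 2) (Fin 2) ℝ)).Finite ∧
      Generates ℝ (fun X Y : Matrix (Fin 2) (Fin 2) ℝ => X * Y - Y * X)
        {!![(1 : ℝ), -1; 0, 0], !![(0 : ℝ), 0; 1, 1]} ∧
      lenSet ℝ (fun X Y : Matrix (Fin 2) (Fin 2) ℝ => X * Y - Y * X)
        {!![(1 : ℝ), -1; 0, 0], !![(0 : ℝ), 0; 1, 1]} = 3) := by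
  refine ⟨fun S _ hS => Nat.sInf_le (Lset_three_eq_top_of_generates hS), Set.toFinite _,
    generates_pair, ?_⟩
  have h₃ := Lset_three_eq_top_of_generates generates_pair
  refine le_antisymm (Nat.sInf_le h₃) (le_csInf ⟨3, h₃⟩ fun k hk => ?_)
  by_contra! hlt
  exact Lset_two_pair_ne_top
    (top_le_iff.mp (hk.ge.trans (Lset_mono _ _ (Nat.le_of_lt_succ hlt))))
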